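/- For m ≥ 3, the digraph M_{2,m} on 2m vertices (indexed by pairs (r,i), r ∈ {1,2}, 1 ≤ i ≤ m, with ((r,i),(s,j)) an edge iff r < s, or r = s and i = j; block adjacency matrix [[I, 1],[0, I]] with m×m blocks) satisfies f(M_{2,m}) = 2, f*(M_{2,m}) = 3, and l(M_{2,m}) = m. -/

import Mathlib

/-- A subtree representation of a digraph with edge relation `E` on vertex type `V`
in a host graph `T` on vertex type `W`: each digraph vertex `v` gets a source set
`src v` and a sink set `snk v`, each inducing a connected (hence nonempty) subgraph
of `T`, such that `E u v` holds iff `src u` meets `snk v`. -/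
structure SubtreeRep {V W : Type} (E : V → V → Prop) (T : SimpleGraph W) where
  src : V → Set W
  snk : V → Set W
  src_connected : ∀ v, (T.induce (src v)).Connected
  snk_connected : ∀ v, (T.induce (snk v)).Connected
  rep : ∀ u v, E u v ↔ (src u ∩ snk v).Nonempty

/-- The set of leaves (vertices of degree 1) of a graph. -/
def treeLeaves {W : Type} (T : SimpleGraph W) : Set W :=
  {w | (T.neighborSet w).ncard = 1}

/-- The leafage of a digraph: the minimum number of leaves of a finite host tree in
which the digraph has a subtree representation. -/
noncomputable def digLeafage {V : Type} (E : V → V → Prop) : ℕ :=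
  sInf {k | ∃ (W : Type) (_ : Fintype W) (T : SimpleGraph W),
    T.IsTree ∧ Nonempty (SubtreeRep E T) ∧ (treeLeaves T).ncard = k}

/-- The catch leafage of a digraph: the minimum number of leaves of a finite host tree
in which the digraph has a subtree representation all of whose sink sets are single
vertices. -/
noncomputable def catchLeafage {V : Type} (E : V → V → Prop) : ℕ :=
  sInf {k | ∃ (W : Type) (_ : Fintype W) (T : SimpleGraph W) (R : SubtreeRep E T),
    T.IsTree ∧ (∀ v, ∃ x, R.snk v = {x}) ∧ (treeLeaves T).ncard = k}

/-- `C` is between `A` and `B` in `T`: `A` and `B` are disjoint and the unique path of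
`T` from `A` to `B` (i.e. the path meeting `A` only at its first vertex and `B` only
at its last vertex) contains a vertex of `C` (possibly an endpoint). -/
def Between {W : Type} (T : SimpleGraph W) (A B C : Set W) : Prop :=
  A ∩ B = ∅ ∧ ∃ (a b : W) (p : T.Walk a b), a ∈ A ∧ b ∈ B ∧ p.IsPath ∧
    (∀ x ∈ p.support, x ∈ A → x = a) ∧ (∀ x ∈ p.support, x ∈ B → x = b) ∧
    ∃ x ∈ C, x ∈ p.support

/-- An asteroidal collection of sets in `T`: pairwise disjoint, and no member is
between two other members. -/
def Asteroidal {W ι : Type} (T : SimpleGraph W) (F : ι → Set W) : Prop :=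
  (∀ i j, i ≠ j → F i ∩ F j = ∅) ∧
  ∀ i j k, i ≠ j → i ≠ k → j ≠ k → ¬ Between T (F i) (F j) (F k)

/-- The star `K_{1,n}`: the center `none` is adjacent to the `n` leaves `some i`. -/
def starGraph (n : ℕ) : SimpleGraph (Option (Fin n)) :=
  SimpleGraph.fromRel (fun a _ => a = none)

/-- A Ferrers digraph: the successor sets are linearly ordered by inclusion. -/
def IsFerrers {V : Type} (F : V → V → Prop) : Prop :=
  ∀ u u' : V, {v | F u v} ⊆ {v | F u' v} ∨ {v | F u' v} ⊆ {v | F u v}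

/-- The Ferrers dimension `f(D)`: the minimum number of Ferrers digraphs whose
intersection is `E`. -/
noncomputable def ferrersDim {V : Type} (E : V → V → Prop) : ℕ :=
  sInf {k | ∃ F : Fin k → V → V → Prop,
    (∀ i, IsFerrers (F i)) ∧ (∀ u v, E u v ↔ ∀ i, F i u v)}

/-- `f*(D)`: the minimum number of pairwise edge-disjoint Ferrers digraphs whose
union is the complement of `E` in `V × V`. -/
noncomputable def fstar {V : Type} (E : V → V → Prop) : ℕ :=
  sInf {k | ∃ F : Fin k → V → V → Prop,
    (∀ i, IsFerrers (F i)) ∧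
    (∀ i j, i ≠ j → ∀ u v, ¬ (F i u v ∧ F j u v)) ∧
    (∀ u v, ¬ E u v ↔ ∃ i, F i u v)}

/-- The width of the incidence poset `P(D)`: the maximum size of an antichain (under
inclusion) of predecessor sets of the digraph `E`. -/
noncomputable def incWidth {V : Type} (E : V → V → Prop) : ℕ :=
  sSup {k | ∃ A : Finset (Set V),
    (↑A : Set (Set V)) ⊆ Set.range (fun v => {u | E u v}) ∧
    IsAntichain (· ⊆ ·) (↑A : Set (Set V)) ∧ A.card = k}

/-- The digraph `D_n` with adjacency matrix `J - I`: all pairs of distinct vertices. -/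
def DnRel (n : ℕ) (i j : Fin n) : Prop := i ≠ j

/-- The digraph `E_n` with adjacency matrix `[[I, Y], [Yᵀ, 0]]` (vertex `n-1` playing
the role of the last row/column). -/
def EnRel (n : ℕ) (i j : Fin n) : Prop :=
  (i.val < n - 1 ∧ j.val < n - 1 ∧ i = j) ∨
  (i.val < n - 1 ∧ j.val = n - 1) ∨
  (i.val = n - 1 ∧ j.val < n - 1)

/-- The digraph `C_n`: a directed `n`-cycle plus a loop at each vertex. -/
def CnRel (n : ℕ) (i j : Fin n) : Prop := j = i ∨ j.val = (i.val + 1) % n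

/-- The digraph `M_{k,m}` on `Fin k × Fin m`: identity diagonal blocks, all-ones
blocks above the diagonal, all-zeros blocks below. -/
def MkmRel (k m : ℕ) (p q : Fin k × Fin m) : Prop :=
  p.1 < q.1 ∨ (p.1 = q.1 ∧ p.2 = q.2)

/-- The digraph `F_n` with adjacency matrix `[[I, Y], [Yᵀ, 1]]` (vertex `n-1` playing
the role of the last row/column). -/
def FnRel (n : ℕ) (i j : Fin n) : Prop := i = j ∨ i.val = n - 1 ∨ j.val = n - 1

/-- The digraph `P_n`: a directed path `1 → 2 → ⋯ → n` plus a loop at each vertex. -/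
def PnRel (n : ℕ) (i j : Fin n) : Prop := j = i ∨ j.val = i.val + 1

/-! In a tree rooted at `r`, a subtree has a unique vertex closest to `r`, its top, and when two
subtrees meet, the deeper of the two tops lies in both. Hence, if every source set of the upper
block meets every sink set of the lower block, the deepest of their tops is common to all members
of one of the two families. Rooting the tree at such a common vertex `z`, the diagonal entries of
the corresponding block mark a private vertex in each of the `m` subtrees through `z`, and private
vertices of different subtrees have disjoint sets of leaves below them. So `m` leaves are needed.

For `f*`, one Ferrers digraph cannot contain both `(i, j)` and `(j, i)` from a diagonal block. With
fewer than `m` colours some column of the upper block and some row of the lower block therefore use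
two colours each. As the upper rows have only edges in the lower columns, a colour present in both
that column and that row is forced, by the Ferrers property, on the cell where they cross. If only
two colours exist, both are forced there, contradicting disjointness. -/

section Ferrers

variable {V : Type} {ι κ : Type*} {E F : V → V → Prop}

theorem isFerrers_iff :
    IsFerrers F ↔ ∀ u u' v v', F u v → F u' v' → F u v' ∨ F u' v := by
  simp only [IsFerrers, Set.subset_def, Set.mem_ofPred_eq]
  grind

theorem isFerrers_le {α : Type*} [LinearOrder α] (f g : V → α) :
    IsFerrers fun u v => f u ≤ g v :=
  fun u u' => (le_total (f u) (f u')).symm.imp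
    (fun h _ hv => h.trans hv) (fun h _ hv => h.trans hv)

theorem isFerrers_lt {α : Type*} [LinearOrder α] (f g : V → α) :
    IsFerrers fun u v => f u < g v :=
  fun u u' => (le_total (f u) (f u')).symm.imp
    (fun h _ hv => h.trans_lt hv) (fun h _ hv => h.trans_lt hv)

theorem IsFerrers.flip (hF : IsFerrers F) : IsFerrers (flip F) :=
  isFerrers_iff.2 fun _ _ _ _ h h' => (isFerrers_iff.1 hF _ _ _ _ h h').symm

theorem IsFerrers.inter_prod (hF : IsFerrers F) (P Q : V → Prop) :
    IsFerrers fun u v => P u ∧ Q v ∧ F u v := by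
  rw [isFerrers_iff] at hF ⊢
  grind

theorem isFerrers_of_subsingleton [Subsingleton κ] {F : κ → V → V → Prop}
    (hF : ∀ p, IsFerrers (F p)) (hE : ∀ u v, E u v ↔ ∀ p, F p u v) : IsFerrers E := by
  rcases isEmpty_or_nonempty κ with _ | ⟨⟨p⟩⟩
  · exact fun u u' => Or.inl fun v _ => (hE u' v).2 isEmptyElim
  · have : E = F p := by
      ext u v
      exact (hE u v).trans ⟨fun h => h p, fun h q => Subsingleton.elim p q ▸ h⟩
    exact this ▸ hF p

/-- The edges `a i → b i` form an induced matching of `E`: the rows `a` and the columns `b` of the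
adjacency matrix cut out an identity matrix. Vertices `a i` and `b j` may coincide. -/
def IsInducedMatching (E : V → V → Prop) (a b : ι → V) : Prop :=
  ∀ i j, E (a i) (b j) ↔ i = j

theorem IsInducedMatching.flip {a b : ι → V} (h : IsInducedMatching E a b) :
    IsInducedMatching (flip E) b a :=
  fun i j => (h j i).trans eq_comm

theorem IsInducedMatching.not_isFerrers [Nontrivial ι] {a b : ι → V}
    (h : IsInducedMatching E a b) : ¬ IsFerrers E := by
  intro hE
  obtain ⟨i, j, hij⟩ := exists_pair_ne ι
  rcases isFerrers_iff.1 hE _ _ _ _ ((h i i).2 rfl) ((h j j).2 rfl) with hc | hc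
  · exact hij ((h i j).1 hc)
  · exact hij ((h j i).1 hc).symm

/-- A colouring of the non-edges of `E`: the digraphs `F p` are pairwise disjoint Ferrers digraphs
with union the complement of `E`. Thus `fstar E` is the least number of colours `p`. -/
structure IsFerrersPartition (E : V → V → Prop) (F : κ → V → V → Prop) : Prop where
  isFerrers : ∀ p, IsFerrers (F p)
  disjoint : ∀ p q, p ≠ q → ∀ u v, ¬ (F p u v ∧ F q u v)
  not_iff : ∀ u v, ¬ E u v ↔ ∃ p, F p u v

theorem IsFerrersPartition.flip {F : κ → V → V → Prop} (h : IsFerrersPartition E F) :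
    IsFerrersPartition (flip E) fun p => flip (F p) where
  isFerrers p := (h.isFerrers p).flip
  disjoint p q hpq u v := h.disjoint p q hpq v u
  not_iff u v := h.not_iff v u

theorem IsFerrersPartition.exists_two_colours_in_column [Fintype ι] [Nontrivial ι] [Fintype κ]
    {F : κ → V → V → Prop} (h : IsFerrersPartition E F) {a b : ι → V}
    (hab : IsInducedMatching E a b) (hcard : Fintype.card κ < Fintype.card ι) :
    ∃ j i i' p q, p ≠ q ∧ F p (a i) (b j) ∧ F q (a i') (b j) := by
  by_contra! hmono
  have hcell : ∀ {i j}, i ≠ j → ∃ p, F p (a i) (b j) := fun hij =>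
    (h.not_iff _ _).1 (mt (hab _ _).1 hij)
  have hcolumn : ∀ j, ∃ p, ∀ i, i ≠ j → F p (a i) (b j) := by
    intro j
    obtain ⟨o, ho⟩ := exists_ne j
    obtain ⟨p, hp⟩ := hcell ho
    refine ⟨p, fun i hij => ?_⟩
    obtain ⟨q, hq⟩ := hcell hij
    by_cases hpq : p = q
    · exact hpq ▸ hq
    · exact absurd hq (hmono j o i p q hpq hp)
  choose colour hcolour using hcolumn
  have hinj : Function.Injective colour := by
    intro i j hij
    by_contra hne
    have hdiag : ∀ l, ¬ F (colour j) (a l) (b l) := fun l hl =>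
      (h.not_iff _ _).2 ⟨_, hl⟩ ((hab l l).2 rfl)
    exact (isFerrers_iff.1 (h.isFerrers (colour j)) _ _ _ _ (hcolour j i hne)
      (hij ▸ hcolour i j (Ne.symm hne))).elim (hdiag i) (hdiag j)
  exact hcard.not_ge (Fintype.card_le_of_injective colour hinj)

theorem IsFerrersPartition.three_le_card [Fintype ι] [Fintype κ] {F : κ → V → V → Prop}
    (h : IsFerrersPartition E F) {a b c d : ι → V} (hab : IsInducedMatching E a b)
    (hcd : IsInducedMatching E c d) (had : ∀ i j, E (a i) (d j)) (hι : 3 ≤ Fintype.card ι) :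
    3 ≤ Fintype.card κ := by
  by_contra! hκ
  have : Nontrivial ι := Fintype.one_lt_card_iff_nontrivial.1 (by omega)
  obtain ⟨j, i, i', p, q, hpq, hp, hq⟩ :=
    h.exists_two_colours_in_column hab (by omega)
  obtain ⟨x, y, y', p', q', hpq', hp', hq'⟩ :=
    h.flip.exists_two_colours_in_column hcd.flip (by omega)
  have hcross : ∀ {e i y}, F e (a i) (b j) → F e (c x) (d y) → F e (c x) (b j) := by
    intro e i y hi hy
    exact (isFerrers_iff.1 (h.isFerrers e) _ _ _ _ hi hy).resolve_left fun hF =>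
      (h.not_iff _ _).2 ⟨e, hF⟩ (had i y)
  have hpq_univ : ∀ r, r = p ∨ r = q := by
    by_contra! ⟨r, hrp, hrq⟩
    exact hκ.not_ge (Fintype.two_lt_card_iff.2 ⟨p, q, r, hpq, hrp.symm, hrq.symm⟩)
  have hcolours : p' = p ∧ q' = q ∨ p' = q ∧ q' = p := by
    rcases hpq_univ p' with rfl | rfl <;> rcases hpq_univ q' with rfl | rfl <;> simp_all
  rcases hcolours with ⟨rfl, rfl⟩ | ⟨rfl, rfl⟩
  · exact h.disjoint _ _ hpq _ _ ⟨hcross hp hp', hcross hq hq'⟩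
  · exact h.disjoint _ _ hpq _ _ ⟨hcross hp hq', hcross hq hp'⟩

end Ferrers

section Tree

/-- The vertex `w` lies on a path from `x` to `y`. In a tree rooted at `x`, this says that `w` is an
ancestor of `y`. -/
def OnPath {W : Type*} (T : SimpleGraph W) (x w y : W) : Prop :=
  ∃ p : T.Walk x y, p.IsPath ∧ w ∈ p.support

variable {W : Type*} {T : SimpleGraph W}

theorem walk_eq_of_isPath (hT : T.IsAcyclic) {x y : W} {p q : T.Walk x y} (hp : p.IsPath)
    (hq : q.IsPath) : p = q :=
  congrArg Subtype.val ((hT.subsingleton_path x y).elim ⟨p, hp⟩ ⟨q, hq⟩)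

theorem OnPath.mem_of_induce_connected (hT : T.IsAcyclic) {S : Set W}
    (hS : (T.induce S).Connected) {x w y : W} (hx : x ∈ S) (hy : y ∈ S) (h : OnPath T x w y) :
    w ∈ S := by
  obtain ⟨p, hp, hw⟩ := h
  obtain ⟨q, hq⟩ := hS.exists_isPath ⟨x, hx⟩ ⟨y, hy⟩
  let incl : T.induce S →g T := (SimpleGraph.Embedding.induce S).toHom
  have hpq : p = q.map incl := walk_eq_of_isPath hT hp (hq.map Subtype.val_injective)
  have hw' : w ∈ (q.map incl).support := hpq ▸ hw
  rw [SimpleGraph.Walk.support_map] at hw'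
  obtain ⟨v, -, rfl⟩ := List.mem_map.1 hw'
  exact v.2

theorem length_eq_dist_of_isPath (hT : T.IsAcyclic) {x y : W} {p : T.Walk x y} (hp : p.IsPath) :
    p.length = T.dist x y := by
  obtain ⟨q, hq, hlen⟩ := p.reachable.exists_path_of_dist
  rw [← hlen, walk_eq_of_isPath hT hp hq]

theorem onPath_iff_dist_add_dist (hT : T.IsTree) {x w y : W} :
    OnPath T x w y ↔ T.dist x w + T.dist w y = T.dist x y := by
  classical
  constructor
  · rintro ⟨p, hp, hw⟩
    rw [← length_eq_dist_of_isPath hT.isAcyclic hp,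
      ← length_eq_dist_of_isPath hT.isAcyclic (hp.takeUntil hw),
      ← length_eq_dist_of_isPath hT.isAcyclic (hp.dropUntil hw),
      ← SimpleGraph.Walk.length_append, p.take_spec]
  · intro h
    obtain ⟨p, hp⟩ := hT.connected.exists_walk_length_eq_dist x w
    obtain ⟨q, hq⟩ := hT.connected.exists_walk_length_eq_dist w y
    refine ⟨p.append q, (p.append q).isPath_of_length_eq_dist ?_, ?_⟩
    · rw [SimpleGraph.Walk.length_append, hp, hq, h]
    · exact SimpleGraph.Walk.mem_support_append_iff _ _ |>.2 (Or.inl p.end_mem_support)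

theorem OnPath.total (hT : T.IsTree) {r x y z : W} (hx : OnPath T r x z) (hy : OnPath T r y z) :
    OnPath T r x y ∨ OnPath T r y x := by
  classical
  obtain ⟨p, hp, hxp⟩ := id hx
  obtain ⟨q, hq, hyq⟩ := id hy
  obtain rfl : p = q := walk_eq_of_isPath hT.isAcyclic hp hq
  rw [← p.take_spec hxp, SimpleGraph.Walk.mem_support_append_iff] at hyq
  refine hyq.symm.imp (fun hdrop => ?_) fun htake => ⟨_, hp.takeUntil hxp, htake⟩
  have hxyz : OnPath T x y z := ⟨_, hp.dropUntil hxp, hdrop⟩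
  rw [onPath_iff_dist_add_dist hT] at *
  omega

theorem onPath_of_isMinOn_dist (hT : T.IsTree) {S : Set W} (hS : (T.induce S).Connected)
    {r u x : W} (hu : u ∈ S) (hmin : IsMinOn (T.dist r) S u) (hx : x ∈ S) : OnPath T r u x := by
  classical
  obtain ⟨p, hp, hlen⟩ := (hT.connected r u).exists_path_of_dist
  obtain ⟨q, hq⟩ := hT.connected.exists_isPath u x
  refine ⟨p.append q, ?_, (SimpleGraph.Walk.mem_support_append_iff _ _).2
    (Or.inl p.end_mem_support)⟩
  have hq_nodup := hq.support_nodup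
  rw [← q.cons_tail_support, List.nodup_cons] at hq_nodup
  rw [SimpleGraph.Walk.isPath_def, SimpleGraph.Walk.support_append, List.nodup_append']
  refine ⟨hp.support_nodup, hq_nodup.2, fun v hvp hvq => ?_⟩
  have hvS : v ∈ S := OnPath.mem_of_induce_connected hT.isAcyclic hS hu hx
    ⟨q, hq, List.mem_of_mem_tail hvq⟩
  have hvu : v ≠ u := fun h => hq_nodup.1 (h ▸ hvq)
  have hlt : T.dist r v < T.dist r u :=
    ((T.dist_le (p.takeUntil v hvp)).trans_lt (p.length_takeUntil_lt_length hvp hvu)).trans_eq hlen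
  exact hlt.not_ge (hmin hvS)

theorem exists_isMinOn_dist {S : Set W} (hS : S.Nonempty) (r : W) :
    ∃ u ∈ S, IsMinOn (T.dist r) S u := by
  obtain ⟨u, hu⟩ := exists_minimalFor_of_wellFoundedLT (· ∈ S) (T.dist r) hS
  exact ⟨u, hu.1, fun v hv => (le_total _ _).elim id (hu.2 hv)⟩

theorem mem_of_isMinOn_dist_of_dist_le (hT : T.IsTree) {S S' : Set W}
    (hS : (T.induce S).Connected) (hS' : (T.induce S').Connected) (hSS' : (S ∩ S').Nonempty)
    {r u u' : W} (hu : u ∈ S) (hu' : u' ∈ S') (hmin : IsMinOn (T.dist r) S u)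
    (hmin' : IsMinOn (T.dist r) S' u') (hle : T.dist r u' ≤ T.dist r u) : u ∈ S' := by
  obtain ⟨x, hx, hx'⟩ := hSS'
  have hux := onPath_of_isMinOn_dist hT hS hu hmin hx
  have hu'x := onPath_of_isMinOn_dist hT hS' hu' hmin' hx'
  suffices OnPath T u' u x from OnPath.mem_of_induce_connected hT.isAcyclic hS' hu' hx' this
  have hcomm := T.dist_comm (u := u) (v := u')
  have htotal := hux.total hT hu'x
  simp only [onPath_iff_dist_add_dist hT] at *
  omega

theorem exists_forall_mem_or_exists_forall_mem (hT : T.IsTree) {ι κ : Type*} [Finite ι] [Finite κ]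
    {A : ι → Set W} {D : κ → Set W} (hA : ∀ i, (T.induce (A i)).Connected)
    (hD : ∀ j, (T.induce (D j)).Connected) (hAD : ∀ i j, (A i ∩ D j).Nonempty) :
    (∃ z, ∀ i, z ∈ A i) ∨ ∃ z, ∀ j, z ∈ D j := by
  obtain ⟨r⟩ := hT.connected.nonempty
  rcases isEmpty_or_nonempty (ι ⊕ κ) with hempty | _
  · exact Or.inl ⟨r, fun i => (hempty.false (Sum.inl i)).elim⟩
  choose topA hA_mem hA_min using fun i =>
    exists_isMinOn_dist (T := T) (Set.nonempty_coe_sort.1 (hA i).nonempty) r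
  choose topD hD_mem hD_min using fun j =>
    exists_isMinOn_dist (T := T) (Set.nonempty_coe_sort.1 (hD j).nonempty) r
  obtain ⟨i | j, hmax⟩ := Finite.exists_max fun s => T.dist r (Sum.elim topA topD s)
  · exact Or.inr ⟨topA i, fun j => mem_of_isMinOn_dist_of_dist_le hT (hA i) (hD j) (hAD i j)
      (hA_mem i) (hD_mem j) (hA_min i) (hD_min j) (hmax (Sum.inr j))⟩
  · exact Or.inl ⟨topD j, fun i => mem_of_isMinOn_dist_of_dist_le hT (hD j) (hA i)
      (Set.inter_comm _ _ ▸ hAD i j) (hD_mem j) (hA_mem i) (hD_min j) (hA_min i)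
      (hmax (Sum.inl i))⟩

end Tree

section Leafage

variable {V W : Type} {ι : Type*} {E : V → V → Prop} {T : SimpleGraph W}

theorem exists_mem_treeLeaves_onPath [Finite W] (hT : T.IsTree) {r x : W} (hx : x ≠ r) :
    ∃ l ∈ treeLeaves T, OnPath T r x l := by
  obtain ⟨p₀, hp₀⟩ := hT.connected.exists_isPath r x
  obtain ⟨l, ⟨p, hp, hxp⟩, hmax⟩ := Set.exists_max_image {l | OnPath T r x l} (T.dist r)
    (Set.toFinite _) ⟨x, p₀, hp₀, p₀.end_mem_support⟩
  refine ⟨l, ?_, p, hp, hxp⟩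
  have hnil : ¬ p.Nil := by
    intro hnil
    rw [SimpleGraph.Walk.nil_iff_support_eq.1 hnil, List.mem_singleton] at hxp
    exact hx hxp
  have hparent : ∀ y, T.Adj l y → y = p.penultimate := by
    intro y hly
    by_cases hy : y ∈ p.support
    · exact hT.isAcyclic.eq_penultimate_of_adj_end hp hly hy
    · have hpy := hp.concat hy hly
      have hle := hmax y ⟨_, hpy, by rw [SimpleGraph.Walk.support_concat]; simp [hxp]⟩
      rw [← length_eq_dist_of_isPath hT.isAcyclic hpy, ← length_eq_dist_of_isPath hT.isAcyclic hp,
        SimpleGraph.Walk.length_concat] at hle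
      omega
  refine Set.ncard_eq_one.2 ⟨p.penultimate, Set.ext fun y => ⟨hparent y, ?_⟩⟩
  rintro rfl
  exact (p.adj_penultimate hnil).symm

theorem card_le_ncard_treeLeaves_of_forall_mem [Finite W] [Nontrivial ι] (hT : T.IsTree)
    {A : ι → Set W} (hA : ∀ i, (T.induce (A i)).Connected) {z : W} (hz : ∀ i, z ∈ A i) {x : ι → W}
    (hx : ∀ i j, x i ∈ A j ↔ i = j) : Nat.card ι ≤ (treeLeaves T).ncard := by
  have hxz : ∀ i, x i ≠ z := by
    intro i h
    obtain ⟨j, hj⟩ := exists_ne i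
    exact hj ((hx i j).1 (h ▸ hz j)).symm
  choose leaf hleaf hxleaf using fun i => exists_mem_treeLeaves_onPath hT (hxz i)
  have heq_of_onPath : ∀ {i j}, OnPath T z (x i) (x j) → i = j := fun {i j} h =>
    (hx i j).1 (h.mem_of_induce_connected hT.isAcyclic (hA j) (hz j) ((hx j j).2 rfl))
  have hinj : Function.Injective leaf := fun i j hij =>
    ((hxleaf i).total hT (hij ▸ hxleaf j)).elim heq_of_onPath fun h => (heq_of_onPath h).symm
  rw [← Set.ncard_range_of_injective hinj]
  exact Set.ncard_le_ncard (Set.range_subset_iff.2 hleaf) (Set.toFinite _)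

namespace SubtreeRep

/-- The representation of the reversed digraph obtained by exchanging sources and sinks. -/
def reverse (R : SubtreeRep E T) : SubtreeRep (flip E) T where
  src := R.snk
  snk := R.src
  src_connected := R.snk_connected
  snk_connected := R.src_connected
  rep u v := by rw [flip, R.rep, Set.inter_comm]

theorem card_le_ncard_treeLeaves_of_forall_mem_src [Finite W] [Nontrivial ι]
    (R : SubtreeRep E T) (hT : T.IsTree) {a b : ι → V} (hab : IsInducedMatching E a b) {z : W}
    (hz : ∀ i, z ∈ R.src (a i)) :
    Nat.card ι ≤ (treeLeaves T).ncard := by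
  choose x hx_src hx_snk using fun i => (R.rep (a i) (b i)).1 ((hab i i).2 rfl)
  refine card_le_ncard_treeLeaves_of_forall_mem hT (fun i => R.src_connected (a i)) hz
    (x := x) fun i j => ⟨fun h => ?_, ?_⟩
  · exact ((hab j i).1 ((R.rep _ _).2 ⟨x i, h, hx_snk i⟩)).symm
  · rintro rfl
    exact hx_src i

theorem card_le_ncard_treeLeaves [Finite W] [Finite ι] [Nontrivial ι] (R : SubtreeRep E T)
    (hT : T.IsTree) {a b c d : ι → V} (hab : IsInducedMatching E a b)
    (hcd : IsInducedMatching E c d) (had : ∀ i j, E (a i) (d j)) :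
    Nat.card ι ≤ (treeLeaves T).ncard := by
  rcases exists_forall_mem_or_exists_forall_mem hT (fun i => R.src_connected (a i))
    (fun j => R.snk_connected (d j)) (fun i j => (R.rep _ _).1 (had i j)) with ⟨z, hz⟩ | ⟨z, hz⟩
  · exact R.card_le_ncard_treeLeaves_of_forall_mem_src hT hab hz
  · exact R.reverse.card_le_ncard_treeLeaves_of_forall_mem_src hT hcd.flip hz

end SubtreeRep

end Leafage

section Spider

variable {ι : Type}

/-- The parent function of the spider rooted at `none`; the leg `i` consists of `(i, false)`
followed by `(i, true)`. The root is its own parent. -/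
def spiderParent : Option (ι × Bool) → Option (ι × Bool)
  | some (i, true) => some (i, false)
  | _ => none

/-- The spider: the tree with legs of length two, indexed by `ι`, joined at the vertex `none`. -/
def spider (ι : Type) : SimpleGraph (Option (ι × Bool)) :=
  SimpleGraph.fromRel fun v w => w = spiderParent v

theorem spider_adj_root (i : ι) : (spider ι).Adj none (some (i, false)) := by
  simp [spider, spiderParent]

theorem spider_adj_leg (i : ι) : (spider ι).Adj (some (i, false)) (some (i, true)) := by
  simp [spider, spiderParent]

theorem connected_spider : (spider ι).Connected := by
  refine SimpleGraph.connected_iff_exists_forall_reachable _ |>.2 ⟨none, ?_⟩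
  rintro (_ | ⟨i, _ | _⟩)
  · rfl
  · exact (spider_adj_root i).reachable
  · exact (spider_adj_root i).reachable.trans (spider_adj_leg i).reachable

theorem edgeSet_spider_subset :
    (spider ι).edgeSet ⊆ Set.range fun v : ι × Bool => s(some v, spiderParent (some v)) := by
  rintro ⟨v, w⟩ (hvw : (spider ι).Adj v w)
  obtain ⟨hne, rfl | rfl⟩ := hvw
  · obtain _ | v := v
    · exact absurd rfl hne
    · exact ⟨v, rfl⟩
  · obtain _ | w := w
    · exact absurd rfl hne
    · exact ⟨w, Sym2.eq_swap⟩

theorem isTree_spider [Finite ι] : (spider ι).IsTree := by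
  refine SimpleGraph.isTree_iff_connected_and_card.2 ⟨connected_spider, le_antisymm ?_
    connected_spider.card_vert_le_card_edgeSet_add_one⟩
  rw [Finite.card_option]
  gcongr
  exact (Nat.card_mono (Set.toFinite _) edgeSet_spider_subset).trans (Finite.card_range_le _)

theorem treeLeaves_spider_subset [Nontrivial ι] :
    treeLeaves (spider ι) ⊆ Set.range fun i => some (i, true) := by
  intro v hv
  obtain ⟨w, hw⟩ := Set.ncard_eq_one.1 hv
  have hunique : ∀ {x y}, (spider ι).Adj v x → (spider ι).Adj v y → x = y := fun hx hy =>
    (hw.subset hx).trans (hw.subset hy).symm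
  obtain _ | ⟨i, _ | _⟩ := v
  · obtain ⟨i, j, hij⟩ := exists_pair_ne ι
    simpa [hij] using hunique (spider_adj_root i) (spider_adj_root j)
  · simpa using hunique (spider_adj_root i).symm (spider_adj_leg i)
  · exact ⟨i, rfl⟩

theorem ncard_treeLeaves_spider_le [Finite ι] [Nontrivial ι] :
    (treeLeaves (spider ι)).ncard ≤ Nat.card ι :=
  (Nat.card_mono (Set.toFinite _) treeLeaves_spider_subset).trans (Finite.card_range_le _)

end Spider

section Mkm

variable {k m : ℕ}

theorem isInducedMatching_mkmRel (r : Fin k) :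
    IsInducedMatching (MkmRel k m) (Prod.mk r) (Prod.mk r) := by
  simp [IsInducedMatching, MkmRel]

theorem mkmRel_of_lt {r s : Fin k} (hrs : r < s) (i j : Fin m) : MkmRel k m (r, i) (s, j) :=
  Or.inl hrs

theorem mkmRel_iff_toLex_le {p q : Fin k × Fin m} :
    MkmRel k m p q ↔ toLex p ≤ toLex q ∧
      toLex (p.1, OrderDual.toDual p.2) ≤ toLex (q.1, OrderDual.toDual q.2) := by
  simp only [MkmRel, Prod.Lex.toLex_le_toLex, OrderDual.toDual_le_toDual]
  grind

theorem ferrersDim_mkmRel (hk : 0 < k) (hm : 2 ≤ m) : ferrersDim (MkmRel k m) = 2 := by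
  have hmem : 2 ∈ {n | ∃ F : Fin n → Fin k × Fin m → Fin k × Fin m → Prop,
      (∀ i, IsFerrers (F i)) ∧ ∀ p q, MkmRel k m p q ↔ ∀ i, F i p q} := by
    refine ⟨![fun p q => toLex p ≤ toLex q,
      fun p q => toLex (p.1, OrderDual.toDual p.2) ≤ toLex (q.1, OrderDual.toDual q.2)], ?_, ?_⟩
    · exact Fin.forall_fin_two.2 ⟨isFerrers_le _ _, isFerrers_le _ _⟩
    · intro p q
      rw [mkmRel_iff_toLex_le, Fin.forall_fin_two]
      rfl
  refine le_antisymm (Nat.sInf_le hmem) (le_csInf ⟨_, hmem⟩ ?_)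
  rintro n ⟨F, hF, hE⟩
  by_contra! hn
  have : Subsingleton (Fin n) := Fin.subsingleton_iff_le_one.2 (by omega)
  have : Nontrivial (Fin m) := Fin.nontrivial_iff_two_le.2 hm
  exact (isInducedMatching_mkmRel ⟨0, hk⟩).not_isFerrers (isFerrers_of_subsingleton hF hE)

/-- The non-edges of `M_{k,m}`: colour `0` takes those below the diagonal in the lexicographic
order, colour `r + 1` those above the diagonal of the block `r`. -/
def mkmColour (k m : ℕ) : Fin (k + 1) → Fin k × Fin m → Fin k × Fin m → Prop :=
  Fin.cons (fun p q => toLex q < toLex p) fun r p q => p.1 = r ∧ q.1 = r ∧ p.2 < q.2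

theorem isFerrersPartition_mkmColour :
    IsFerrersPartition (MkmRel k m) (mkmColour k m) where
  isFerrers := by
    refine Fin.forall_fin_succ.2 ⟨?_, fun r => ?_⟩
    · exact isFerrers_lt (fun p => OrderDual.toDual (toLex p)) fun q => OrderDual.toDual (toLex q)
    · exact (isFerrers_lt Prod.snd Prod.snd).inter_prod (·.1 = r) (·.1 = r)
  disjoint c c' hc p q := by
    cases c using Fin.cases <;> cases c' using Fin.cases <;>
      simp only [mkmColour, Fin.cons_zero, Fin.cons_succ, Prod.Lex.toLex_lt_toLex] <;> grind
  not_iff p q := by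
    simp only [mkmColour, Fin.exists_fin_succ, Fin.cons_zero, Fin.cons_succ, MkmRel,
      Prod.Lex.toLex_lt_toLex]
    grind

theorem fstar_mkmRel_two (hm : 3 ≤ m) : fstar (MkmRel 2 m) = 3 := by
  have h := isFerrersPartition_mkmColour (k := 2) (m := m)
  have hmem : 3 ∈ {n | ∃ F : Fin n → Fin 2 × Fin m → Fin 2 × Fin m → Prop,
      (∀ i, IsFerrers (F i)) ∧ (∀ i j, i ≠ j → ∀ p q, ¬ (F i p q ∧ F j p q)) ∧
      ∀ p q, ¬ MkmRel 2 m p q ↔ ∃ i, F i p q} :=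
    ⟨mkmColour 2 m, h.isFerrers, h.disjoint, h.not_iff⟩
  refine le_antisymm (Nat.sInf_le hmem) (le_csInf ⟨_, hmem⟩ ?_)
  rintro n ⟨F, hF, hdisjoint, hcover⟩
  simpa using IsFerrersPartition.three_le_card ⟨hF, hdisjoint, hcover⟩
    (isInducedMatching_mkmRel 0) (isInducedMatching_mkmRel 1) (mkmRel_of_lt Fin.zero_lt_one)
    (by simpa using hm)

/-- The representation of `M_{2,m}` in the spider with `m` legs. -/
def mkmSpiderRep (m : ℕ) : SubtreeRep (MkmRel 2 m) (spider (Fin m)) where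
  src
    | (0, i) => {none, some (i, false)} ∪ {some (i, false), some (i, true)}
    | (1, i) => {some (i, false)}
  snk
    | (0, i) => {some (i, true)}
    | (1, i) => {none, some (i, false)}
  src_connected
    | (0, i) => SimpleGraph.induce_union_connected
        (SimpleGraph.induce_pair_connected_of_adj (spider_adj_root i)).preconnected
        (SimpleGraph.induce_pair_connected_of_adj (spider_adj_leg i)).preconnected
        ⟨some (i, false), by simp, by simp⟩
    | (1, i) => SimpleGraph.Connected.of_subsingleton
  snk_connected
    | (0, i) => SimpleGraph.Connected.of_subsingleton
    | (1, i) => SimpleGraph.induce_pair_connected_of_adj (spider_adj_root i)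
  rep := by
    rintro ⟨r, i⟩ ⟨s, j⟩
    fin_cases r <;> fin_cases s <;> simp [MkmRel, Set.Nonempty, eq_comm]

theorem digLeafage_mkmRel_two (hm : 2 ≤ m) : digLeafage (MkmRel 2 m) = m := by
  have : Nontrivial (Fin m) := Fin.nontrivial_iff_two_le.2 hm
  have hmem : (treeLeaves (spider (Fin m))).ncard ∈ {n | ∃ (W : Type) (_ : Fintype W)
      (T : SimpleGraph W), T.IsTree ∧ Nonempty (SubtreeRep (MkmRel 2 m) T) ∧
        (treeLeaves T).ncard = n} :=
    ⟨_, inferInstance, spider (Fin m), isTree_spider, ⟨mkmSpiderRep m⟩, rfl⟩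
  have hle := ncard_treeLeaves_spider_le (ι := Fin m)
  rw [Nat.card_fin] at hle
  refine le_antisymm ((Nat.sInf_le hmem).trans hle) (le_csInf ⟨_, hmem⟩ ?_)
  rintro n ⟨W, _, T, hT, ⟨R⟩, rfl⟩
  simpa using R.card_le_ncard_treeLeaves hT (isInducedMatching_mkmRel 0)
    (isInducedMatching_mkmRel 1) (mkmRel_of_lt Fin.zero_lt_one)

end Mkm

/-- For `m ≥ 3`, the digraph `M_{2,m}` on `2m` vertices satisfies
`f(M_{2,m}) = 2`, `f*(M_{2,m}) = 3`, and `l(M_{2,m}) = m`. -/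
theorem stmt_13 (m : ℕ) (hm : 3 ≤ m) :
    ferrersDim (MkmRel 2 m) = 2 ∧ fstar (MkmRel 2 m) = 3 ∧
    digLeafage (MkmRel 2 m) = m :=
  ⟨ferrersDim_mkmRel two_pos (by omega), fstar_mkmRel_two hm, digLeafage_mkmRel_two (by omega)⟩
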